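/- arXiv:1902.02406 — 2 statements merged into one kernel-verified Lean document; each statement's English description precedes it below -/
import Mathlib

section
/- Let X be a complex Banach space, n,d ∈ ℕ with 1 ≤ d ≤ n, and p > q > 1. Then for every function f : {-1,1}^n → X of degree at most d, ‖f‖_{L_p({-1,1}^n;X)} ≤ T_d(√((p−1)/(q−1))) · ‖f‖_{L_q({-1,1}^n;X)}. -/
open scoped BigOperators ENNReal NNReal

noncomputable section

namespace HammingCube

variable {X : Type*} [NormedAddCommGroup X] [NormedSpace ℂ X]

/-- The sign ±1 associated to a boolean coordinate. -/
def sgn (b : Bool) : ℝ := if b then 1 else -1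

/-- The Walsh function `w_A(ε) = ∏_{i ∈ A} ε_i`. -/
def walsh {n : ℕ} (A : Finset (Fin n)) (ε : Fin n → Bool) : ℝ := ∏ i ∈ A, sgn (ε i)

/-- The Fourier–Walsh coefficient `f̂(A) = 2⁻ⁿ ∑_δ f(δ) w_A(δ)`. -/
def coeff {n : ℕ} (f : (Fin n → Bool) → X) (A : Finset (Fin n)) : X :=
  (2 ^ n : ℝ)⁻¹ • ∑ δ : Fin n → Bool, walsh A δ • f δ

/-- `f` has degree at most `d`: `f̂(A) = 0` whenever `|A| > d`. -/
def degLE {n : ℕ} (f : (Fin n → Bool) → X) (d : ℕ) : Prop :=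
  ∀ A : Finset (Fin n), d < A.card → coeff f A = 0

/-- `f` belongs to the `d`-th tail space: `f̂(A) = 0` whenever `|A| < d`. -/
def tailSpace {n : ℕ} (f : (Fin n → Bool) → X) (d : ℕ) : Prop :=
  ∀ A : Finset (Fin n), A.card < d → coeff f A = 0

/-- The heat semigroup `e^{-tΔ} f = ∑_A e^{-t|A|} f̂(A) w_A`. -/
def heat {n : ℕ} (t : ℝ) (f : (Fin n → Bool) → X) : (Fin n → Bool) → X :=
  fun ε => ∑ A : Finset (Fin n), Real.exp (-t * A.card) • walsh A ε • coeff f A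

/-- The hypercube Laplacian `Δ f = ∑_A |A| f̂(A) w_A`. -/
def lap {n : ℕ} (f : (Fin n → Bool) → X) : (Fin n → Bool) → X :=
  fun ε => ∑ A : Finset (Fin n), (A.card : ℝ) • walsh A ε • coeff f A

/-- The fractional Laplacian `Δ^γ f = ∑_A |A|^γ f̂(A) w_A`. -/
def fracLap {n : ℕ} (γ : ℝ) (f : (Fin n → Bool) → X) : (Fin n → Bool) → X :=
  fun ε => ∑ A : Finset (Fin n), ((A.card : ℝ) ^ γ) • walsh A ε • coeff f A

/-- The `i`-th discrete partial derivative. -/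
def pderiv {n : ℕ} (i : Fin n) (f : (Fin n → Bool) → X) : (Fin n → Bool) → X :=
  fun ε => (2 : ℝ)⁻¹ • (f ε - f (Function.update ε i (!(ε i))))

/-- The vector-valued `L_p` norm `(2⁻ⁿ ∑_ε ‖f(ε)‖^p)^{1/p}` for finite `p`. -/
def lpNorm {n : ℕ} {Y : Type*} [NormedAddCommGroup Y] (p : ℝ)
    (f : (Fin n → Bool) → Y) : ℝ :=
  ((2 ^ n : ℝ)⁻¹ * ∑ ε : Fin n → Bool, ‖f ε‖ ^ p) ^ (1 / p)

/-- The `L_∞` norm `max_ε ‖f(ε)‖`. -/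
def linfNorm {n : ℕ} {Y : Type*} [NormedAddCommGroup Y]
    (f : (Fin n → Bool) → Y) : ℝ :=
  ⨆ ε : Fin n → Bool, ‖f ε‖

/-- The `L_p` norm for `p ∈ [1,∞]` encoded as `p : ℝ≥0∞`. -/
def lpNormE {n : ℕ} {Y : Type*} [NormedAddCommGroup Y] (p : ℝ≥0∞)
    (f : (Fin n → Bool) → Y) : ℝ :=
  if p = ⊤ then linfNorm f else lpNorm p.toReal f

/-- The scalar `L_p` norm of the gradient `‖(∑_i |∂_i f|²)^{1/2}‖_{L_p}`. -/
def gradLpNorm {n : ℕ} (p : ℝ) (f : (Fin n → Bool) → ℂ) : ℝ :=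
  lpNorm p (fun ε => Real.sqrt (∑ i : Fin n, ‖pderiv i f ε‖ ^ 2))

/-- The Rademacher projection `Rad f(ε) = ∑_i f̂({i}) ε_i`. -/
def Rad {n : ℕ} (f : (Fin n → Bool) → X) : (Fin n → Bool) → X :=
  fun ε => ∑ i : Fin n, sgn (ε i) • coeff f {i}

/-- A complex Banach space is `K`-convex if the Rademacher projections are uniformly
bounded on `L_q` for some `q ∈ (1,∞)`. -/
def KConvex (X : Type*) [NormedAddCommGroup X] [NormedSpace ℂ X] : Prop :=
  ∃ q : ℝ, 1 < q ∧ ∃ M : ℝ, ∀ (n : ℕ) (f : (Fin n → Bool) → X),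
    lpNorm q (Rad f) ≤ M * lpNorm q f

/-- `X` has cotype `q` with constant `C`. -/
def HasCotype (X : Type*) [NormedAddCommGroup X] [NormedSpace ℂ X] (q C : ℝ) : Prop :=
  ∀ (n : ℕ) (x : Fin n → X),
    C⁻¹ * (∑ i : Fin n, ‖x i‖ ^ q) ^ (1 / q) ≤
      ((2 ^ n : ℝ)⁻¹ * ∑ ε : Fin n → Bool, ‖∑ i : Fin n, sgn (ε i) • x i‖ ^ q) ^ (1 / q)

/-- The entropy `Ent(h)` of a nonnegative function on the cube. -/
def entropy {n : ℕ} (h : (Fin n → Bool) → ℝ) : ℝ :=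
  (2 ^ n : ℝ)⁻¹ * ∑ ε : Fin n → Bool, h ε * Real.log (h ε) -
    ((2 ^ n : ℝ)⁻¹ * ∑ ε : Fin n → Bool, h ε) *
      Real.log ((2 ^ n : ℝ)⁻¹ * ∑ ε : Fin n → Bool, h ε)

/-- The `L_∞` norm of the gradient `max_ε (∑_i |∂_i f(ε)|²)^{1/2}`. -/
def gradLinfNorm {n : ℕ} (f : (Fin n → Bool) → ℂ) : ℝ :=
  ⨆ ε : Fin n → Bool, Real.sqrt (∑ i : Fin n, ‖pderiv i f ε‖ ^ 2)


theorem aux_logsob (s : ℝ) (h0 : 0 ≤ s) (h1 : s < 1) :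
    (1+s)^2 * Real.log (1+s) + (1-s)^2 * Real.log (1-s) - (1+s^2) * Real.log (1+s^2) - 2*s^2 ≤ 0 := by
  have hder1 : ∀ x ∈ Set.Ico (0:ℝ) 1, HasDerivAt (fun s : ℝ => (1+s) * Real.log (1+s) - (1-s) * Real.log (1-s) - s * Real.log (1+s^2) - 2*s)
      (Real.log (1+x) + Real.log (1-x) - Real.log (1+x^2) - 2*x^2/(1+x^2)) x := by
    intro x hx
    have e1 : HasDerivAt (fun s:ℝ => 1+s) 1 x := by simpa using (hasDerivAt_id x).const_add 1
    have e2 : HasDerivAt (fun s:ℝ => 1-s) (-1) x := by simpa using (hasDerivAt_id x).const_sub 1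
    have e3 : HasDerivAt (fun s:ℝ => 1+s^2) (2*x) x := by simpa using (hasDerivAt_pow 2 x).const_add 1
    have p1 : 1 + x ≠ 0 := by linarith [hx.1]
    have p2 : 1 - x ≠ 0 := by linarith [hx.2]
    have p3 : 1 + x^2 ≠ 0 := by positivity
    have := (((e1.mul (e1.log p1)).sub (e2.mul (e2.log p2))).sub ((hasDerivAt_id x).mul (e3.log p3))).sub ((hasDerivAt_id x).const_mul 2)
    refine HasDerivAt.congr_deriv this ?_
    simp only [id]
    field_simp
    ring
  have hder2 : ∀ x ∈ Set.Ico (0:ℝ) 1, HasDerivAt (fun s : ℝ => (1+s)^2 * Real.log (1+s) + (1-s)^2 * Real.log (1-s) - (1+s^2) * Real.log (1+s^2) - 2*s^2)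
      (2 * ((1+x) * Real.log (1+x) - (1-x) * Real.log (1-x) - x * Real.log (1+x^2) - 2*x)) x := by
    intro x hx
    have e1 : HasDerivAt (fun s:ℝ => 1+s) 1 x := by simpa using (hasDerivAt_id x).const_add 1
    have e2 : HasDerivAt (fun s:ℝ => 1-s) (-1) x := by simpa using (hasDerivAt_id x).const_sub 1
    have e3 : HasDerivAt (fun s:ℝ => 1+s^2) (2*x) x := by simpa using (hasDerivAt_pow 2 x).const_add 1
    have p1 : 1 + x ≠ 0 := by linarith [hx.1]
    have p2 : 1 - x ≠ 0 := by linarith [hx.2]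
    have p3 : 1 + x^2 ≠ 0 := by positivity
    have := ((((e1.pow 2).mul (e1.log p1)).add ((e2.pow 2).mul (e2.log p2))).sub (e3.mul (e3.log p3))).sub ((hasDerivAt_pow 2 x).const_mul 2)
    refine HasDerivAt.congr_deriv this ?_
    try simp only [Pi.pow_apply]
    field_simp
    push_cast
    ring
  have anti1 : AntitoneOn (fun s : ℝ => (1+s) * Real.log (1+s) - (1-s) * Real.log (1-s) - s * Real.log (1+s^2) - 2*s) (Set.Ico 0 1) := by
    apply antitoneOn_of_deriv_nonpos (convex_Ico 0 1)
    · exact fun x hx => (hder1 x hx).continuousAt.continuousWithinAt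
    · exact fun x hx => (hder1 x (interior_subset hx)).differentiableAt.differentiableWithinAt
    · intro x hx
      have hx := interior_subset hx
      rw [(hder1 x hx).deriv, ← Real.log_mul (by linarith [hx.1]) (by linarith [hx.2])]
      have : Real.log ((1+x)*(1-x)) ≤ Real.log (1+x^2) := by
        apply Real.log_le_log
        · exact mul_pos (by linarith [hx.1]) (by linarith [hx.2])
        · nlinarith
      have : 0 ≤ 2*x^2/(1+x^2) := by positivity
      linarith
  have anti2 : AntitoneOn (fun s : ℝ => (1+s)^2 * Real.log (1+s) + (1-s)^2 * Real.log (1-s) - (1+s^2) * Real.log (1+s^2) - 2*s^2) (Set.Ico 0 1) := by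
    apply antitoneOn_of_deriv_nonpos (convex_Ico 0 1)
    · exact fun x hx => (hder2 x hx).continuousAt.continuousWithinAt
    · exact fun x hx => (hder2 x (interior_subset hx)).differentiableAt.differentiableWithinAt
    · intro x hx
      have hx := interior_subset hx
      rw [(hder2 x hx).deriv]
      have := anti1 (by simp) hx hx.1
      simp at this
      linarith
  have := anti2 (by simp) ⟨h0, h1⟩ h0
  simpa using this

theorem logsob (A B : ℝ) (hB : 0 < B) (hAB : B ≤ A) :
    A^2 * Real.log (A^2) + B^2 * Real.log (B^2) - 2 * ((A^2+B^2)/2 * Real.log ((A^2+B^2)/2)) ≤ (A-B)^2 := by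
  obtain ⟨c, s, hc, h0, h1, rfl, rfl⟩ : ∃ c s : ℝ, 0 < c ∧ 0 ≤ s ∧ s < 1 ∧ A = c * (1+s) ∧ B = c*(1-s) := by
    refine ⟨(A+B)/2, (A-B)/(A+B), by linarith, div_nonneg (by linarith) (by linarith), ?_, ?_, ?_⟩
    · rw [div_lt_one] <;> linarith
    · have : A + B ≠ 0 := by linarith
      field_simp
      ring
    · have : A + B ≠ 0 := by linarith
      field_simp
      ring
  have e : ((c*(1+s))^2 + (c*(1-s))^2)/2 = c^2 * (1+s^2) := by ring
  rw [e, Real.log_pow, Real.log_pow, Real.log_mul hc.ne' (by linarith), Real.log_mul hc.ne' (by linarith),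
    Real.log_mul (by positivity) (by positivity), Real.log_pow]
  have := mul_le_mul_of_nonneg_left (aux_logsob s h0 h1) (sq_nonneg c)
  push_cast
  nlinarith

theorem sinh_scale (a b s : ℝ) (ha : 0 ≤ a) (hab : a ≤ b) (hs : 0 ≤ s) :
    b * Real.sinh (a * s) ≤ a * Real.sinh (b * s) := by
  have hd : ∀ x, HasDerivAt (fun x => a * Real.sinh (b*x) - b * Real.sinh (a*x))
      (a * b * (Real.cosh (b*x) - Real.cosh (a*x))) x := by
    intro x
    have e1 : HasDerivAt (fun x => b * x) b x := by simpa using (hasDerivAt_id x).const_mul b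
    have e2 : HasDerivAt (fun x => a * x) a x := by simpa using (hasDerivAt_id x).const_mul a
    refine HasDerivAt.congr_deriv ((e1.sinh.const_mul a).sub (e2.sinh.const_mul b)) ?_
    ring
  have : MonotoneOn (fun x => a * Real.sinh (b*x) - b * Real.sinh (a*x)) (Set.Ici 0) := by
    apply monotoneOn_of_deriv_nonneg (convex_Ici 0)
    · exact fun x hx => (hd x).continuousAt.continuousWithinAt
    · exact fun x hx => (hd x).differentiableAt.differentiableWithinAt
    · intro x hx
      have hx : 0 ≤ x := interior_subset hx
      rw [(hd x).deriv]
      have : Real.cosh (a*x) ≤ Real.cosh (b*x) := by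
        rw [Real.cosh_le_cosh, abs_of_nonneg (by positivity), abs_of_nonneg (mul_nonneg (ha.trans hab) hx)]
        gcongr
      exact mul_nonneg (mul_nonneg ha (ha.trans hab)) (by linarith)
  have := this (by simp) (show s ∈ Set.Ici 0 from hs) hs
  simp at this
  linarith

theorem stroock_sinh (t s : ℝ) (ht : 1 < t) (hs : 0 ≤ s) :
    4 * (t-1) * Real.sinh (t*s)^2 ≤ t^2 * (Real.sinh (2*s) * Real.sinh (2*(t-1)*s)) := by
  have h1 := sinh_scale |t-2| t s (abs_nonneg _) (by rw [abs_le]; constructor <;> linarith) hs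
  have h2 : (t * Real.sinh (|t-2| * s))^2 ≤ (|t-2| * Real.sinh (t*s))^2 := by
    apply pow_le_pow_left₀ _ h1
    exact mul_nonneg (by linarith) (Real.sinh_nonneg_iff.2 (by positivity))
  rw [mul_pow, mul_pow, sq_abs] at h2
  have h3 : Real.sinh (|t-2| * s)^2 = Real.sinh ((t-2)*s)^2 := by
    rcases abs_choice (t-2) with h | h <;> rw [h]
    rw [neg_mul, Real.sinh_neg]; ring
  rw [h3] at h2
  have h4 : Real.sinh (2*s) * Real.sinh (2*(t-1)*s) = Real.sinh (t*s)^2 - Real.sinh ((t-2)*s)^2 := by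
    have e1 : 2*s = t*s - (t-2)*s := by ring
    have e2 : 2*(t-1)*s = t*s + (t-2)*s := by ring
    rw [e1, e2, Real.sinh_sub, Real.sinh_add]
    nlinarith [Real.cosh_sq (t*s), Real.cosh_sq ((t-2)*s)]
  rw [h4]
  nlinarith

theorem stroock (x y t : ℝ) (hy : 0 < y) (hxy : y ≤ x) (ht : 1 < t) :
    4 * (t-1) * (x^(t/2) - y^(t/2))^2 ≤ t^2 * ((x-y) * (x^(t-1) - y^(t-1))) := by
  obtain ⟨m, s, hs, rfl, rfl⟩ : ∃ m s : ℝ, 0 ≤ s ∧ x = Real.exp (m + 2*s) ∧ y = Real.exp (m - 2*s) := by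
    refine ⟨(Real.log x + Real.log y)/2, (Real.log x - Real.log y)/4, ?_, ?_, ?_⟩
    · linarith [Real.log_le_log hy hxy]
    · rw [show (Real.log x + Real.log y)/2 + 2*((Real.log x - Real.log y)/4) = Real.log x by ring, Real.exp_log (by linarith)]
    · rw [show (Real.log x + Real.log y)/2 - 2*((Real.log x - Real.log y)/4) = Real.log y by ring, Real.exp_log (by linarith)]
  have key : ∀ a, Real.exp (m + 2*s) ^ a - Real.exp (m - 2*s) ^ a = Real.exp (m*a) * (2 * Real.sinh (2*a*s)) := by
    intro a
    rw [← Real.exp_mul, ← Real.exp_mul, Real.sinh_eq, show (m+2*s)*a = m*a + 2*a*s by ring, show (m-2*s)*a = m*a + -(2*a*s) by ring, Real.exp_add, Real.exp_add]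
    ring
  have k1 := key 1
  simp only [Real.rpow_one] at k1
  rw [k1, key, key]
  have e : Real.exp (m*1) * Real.exp (m*(t-1)) = Real.exp (m*(t/2))^2 := by
    rw [← Real.exp_add, ← Real.exp_nat_mul]; congr 1; push_cast; ring
  have := mul_le_mul_of_nonneg_left (stroock_sinh t s ht hs) (show 0 ≤ 4 * Real.exp (m*(t/2))^2 by positivity)
  calc _ = 4 * Real.exp (m*(t/2))^2 * (4 * (t-1) * Real.sinh (t*s)^2) := by
        rw [show 2*(t/2)*s = t*s by ring]; ring
    _ ≤ _ := this
    _ = _ := by rw [← e, show 2*1*s = 2*s by ring]; ring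


theorem two_point_norm (p q y : ℝ) (hq : 1 < q) (hqp : q < p) (hy0 : 0 ≤ y) (hy1 : y ≤ 1) :
    (((1 + y * Real.sqrt ((q-1)/(p-1)))^p + (1 - y * Real.sqrt ((q-1)/(p-1)))^p)/2)^(1/p)
      ≤ (((1 + y)^q + (1 - y)^q)/2)^(1/q) := by
  set z : ℝ → ℝ := fun t => y * Real.sqrt ((q-1)/(t-1)) with hz
  have hz0 : ∀ t, 0 ≤ z t := fun t => by positivity
  have hsq1 : ∀ t ∈ Set.Icc q p, Real.sqrt ((q-1)/(t-1)) ≤ 1 := by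
    intro t ht
    rw [Real.sqrt_le_one, div_le_one] <;> linarith [ht.1]
  have hz1 : ∀ t ∈ Set.Icc q p, z t ≤ 1 := fun t ht =>
    mul_le_one₀ hy1 (Real.sqrt_nonneg _) (hsq1 t ht)
  have hz1' : ∀ t ∈ Set.Ioo q p, z t < 1 := by
    intro t ht
    have : Real.sqrt ((q-1)/(t-1)) < 1 := by
      rw [Real.sqrt_lt' one_pos, one_pow]
      rw [div_lt_one] <;> linarith [ht.1]
    calc z t ≤ 1 * Real.sqrt ((q-1)/(t-1)) := by
          simp only [hz]; gcongr
      _ < 1 := by linarith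
  set E : ℝ → ℝ := fun t => ((1 + z t)^t + (1 - z t)^t)/2 with hE
  have hEpos : ∀ t ∈ Set.Icc q p, 0 < E t := by
    intro t ht
    have h1 : 0 < (1 + z t)^t := Real.rpow_pos_of_pos (by linarith [hz0 t]) _
    have h2 : 0 ≤ (1 - z t)^t := Real.rpow_nonneg (by linarith [hz1 t ht]) _
    simp only [hE]; linarith
  have hzd : ∀ t, 1 < t → HasDerivAt z (-(z t / (2*(t-1)))) t := by
    intro t ht
    have e1 : HasDerivAt (fun t:ℝ => t - 1) 1 t := by simpa using (hasDerivAt_id t).sub_const 1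
    have ht1 : t - 1 ≠ 0 := by linarith
    have e2 : HasDerivAt (fun t:ℝ => (q-1)/(t-1)) (-((q-1)/(t-1)^2)) t := by
      refine HasDerivAt.congr_deriv ((hasDerivAt_const t (q-1)).div e1 ht1) ?_
      field_simp; ring
    have hpos : 0 < (q-1)/(t-1) := div_pos (by linarith) (by linarith)
    refine HasDerivAt.congr_deriv ((e2.sqrt hpos.ne').const_mul y) ?_
    simp only [hz]
    have hs : Real.sqrt ((q-1)/(t-1)) ≠ 0 := (Real.sqrt_pos.2 hpos).ne'
    have hs2 : (q-1) = Real.sqrt ((q-1)/(t-1))^2 * (t-1) := by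
      rw [Real.sq_sqrt hpos.le]; field_simp
    set r := Real.sqrt ((q-1)/(t-1))
    rw [hs2]
    field_simp
  have hd : ∀ t ∈ Set.Ioo q p, HasDerivAt (fun t => Real.log (E t) / t)
      ((((((1 + z t)^t * Real.log (1 + z t) + (1 - z t)^t * Real.log (1 - z t))
          - (z t / (2*(t-1))) * t * ((1 + z t)^(t-1) - (1 - z t)^(t-1)))/2 / E t) * t
            - Real.log (E t)) / t^2) t := by
    intro t ht
    have ht1 : 1 < t := hq.trans ht.1
    have hzt := hz1' t ht
    have hzt0 := hz0 t
    have e1 : HasDerivAt (fun t => 1 + z t) (-(z t / (2*(t-1)))) t := (hzd t ht1).const_add 1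
    have e2 : HasDerivAt (fun t => 1 - z t) (-(-(z t / (2*(t-1))))) t := (hzd t ht1).const_sub 1
    have f1 := e1.rpow (hasDerivAt_id t) (by linarith)
    have f2 := e2.rpow (hasDerivAt_id t) (by linarith)
    have hEt := hEpos t (Set.Ioo_subset_Icc_self ht)
    have g := (((f1.add f2).div_const 2).log hEt.ne').div (hasDerivAt_id t) (by (try simp only [id]); linarith)
    refine HasDerivAt.congr_deriv g ?_
    simp only [id, Pi.add_apply]
    have : ((1 + z t) ^ t + (1 - z t) ^ t) / 2 = E t := rfl
    rw [this]
    congr 1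
    ring
  have anti : AntitoneOn (fun t => Real.log (E t) / t) (Set.Icc q p) := by
    apply antitoneOn_of_deriv_nonpos (convex_Icc q p)
    · have hzc : ContinuousOn z (Set.Icc q p) := fun t ht =>
        (hzd t (by linarith [ht.1])).continuousAt.continuousWithinAt
      refine ContinuousOn.div (ContinuousOn.log ?_ fun t ht => (hEpos t ht).ne') continuousOn_id
        (fun t ht => by (try simp only [id]); linarith [ht.1])
      refine ContinuousOn.div_const (ContinuousOn.add ?_ ?_) 2
      · exact (continuousOn_const.add hzc).rpow continuousOn_id
          (fun t ht => Or.inr (by (try simp only [id]); linarith [ht.1]))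
      · exact (continuousOn_const.sub hzc).rpow continuousOn_id
          (fun t ht => Or.inr (by (try simp only [id]); linarith [ht.1]))
    · rw [interior_Icc]
      exact fun t ht => (hd t ht).differentiableAt.differentiableWithinAt
    · rw [interior_Icc]
      intro t ht
      rw [(hd t ht).deriv]
      have ht1 : 1 < t := hq.trans ht.1
      have hzt := hz1' t ht
      have hzt0 := hz0 t
      have hEt := hEpos t (Set.Ioo_subset_Icc_self ht)
      apply div_nonpos_of_nonpos_of_nonneg _ (sq_nonneg t)
      have hA : 0 < 1 + z t := by linarith
      have hB : 0 < 1 - z t := by linarith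
      have sq : ∀ a : ℝ, 0 < a → (a^(t/2))^2 = a^t := by
        intro a ha
        rw [← Real.rpow_natCast, ← Real.rpow_mul ha.le]; congr 1; push_cast; ring
      have L := logsob ((1+z t)^(t/2)) ((1-z t)^(t/2)) (Real.rpow_pos_of_pos hB _)
        (Real.rpow_le_rpow hB.le (by linarith) (by linarith))
      have S := stroock (1 + z t) (1 - z t) t hB (by linarith) ht1
      rw [sq _ hA, sq _ hB, Real.log_rpow hA, Real.log_rpow hB,
        show ((1 + z t) ^ t + (1 - z t) ^ t) / 2 = E t from rfl] at L
      set D := ((1 + z t) ^ (t / 2) - (1 - z t) ^ (t / 2))^2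
      set W := (1 + z t)^(t-1) - (1 - z t)^(t-1)
      set P := (1 + z t)^t * Real.log (1 + z t) + (1 - z t)^t * Real.log (1 - z t) with hP
      have S' : D ≤ t^2 * (2 * z t * W) / (4*(t-1)) := by
        rw [le_div_iff₀ (by linarith)]
        have : (1 + z t - (1 - z t)) = 2 * z t := by ring
        rw [this] at S
        linarith
      have hfin : t * P - 2 * (E t * Real.log (E t)) ≤ t^2 * (2 * z t * W) / (4*(t-1)) := by
        rw [hP]; linarith
      have h3 : (P - z t / (2*(t-1)) * t * W)/2 * t ≤ E t * Real.log (E t) := by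
        have ht1' : t - 1 ≠ 0 := by linarith
        have : t^2 * (2 * z t * W) / (4*(t-1)) = z t / (2*(t-1)) * t * W * t := by
          field_simp; ring
        rw [this] at hfin
        linarith
      rw [sub_nonpos, div_mul_eq_mul_div, div_le_iff₀ hEt]
      linarith
  have hmain := anti (Set.left_mem_Icc.2 hqp.le) (Set.right_mem_Icc.2 hqp.le) hqp.le
  have hzq : z q = y := by
    simp only [hz]; rw [div_self (by linarith)]; simp
  have hEq : E q = ((1+y)^q + (1-y)^q)/2 := by simp only [hE, hzq]
  rw [← hEq]
  change (E p)^(1/p) ≤ _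
  rw [Real.rpow_def_of_pos (hEpos p (Set.right_mem_Icc.2 hqp.le)), Real.rpow_def_of_pos (hEpos q (Set.left_mem_Icc.2 hqp.le))]
  apply Real.exp_le_exp.2
  simpa [div_eq_mul_inv] using hmain

/-- two-point inequality, for the critical parameter -/
theorem two_point_crit (p q a b : ℝ) (hq : 1 < q) (hqp : q < p) (hb : 0 ≤ b) (hab : b ≤ a) :
    ((((1 + Real.sqrt ((q-1)/(p-1)))/2 * a + (1 - Real.sqrt ((q-1)/(p-1)))/2 * b)^p
      + ((1 - Real.sqrt ((q-1)/(p-1)))/2 * a + (1 + Real.sqrt ((q-1)/(p-1)))/2 * b)^p)/2)^(1/p)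
      ≤ ((a^q + b^q)/2)^(1/q) := by
  set r := Real.sqrt ((q-1)/(p-1)) with hr
  have hr0 : 0 ≤ r := Real.sqrt_nonneg _
  have hr1 : r ≤ 1 := by
    rw [hr, Real.sqrt_le_one, div_le_one] <;> linarith
  have hp0 : 0 < p := by linarith
  have hq0 : 0 < q := by linarith
  obtain ⟨c, y, hc, h0, h1, rfl, rfl⟩ : ∃ c y : ℝ, 0 ≤ c ∧ 0 ≤ y ∧ y ≤ 1 ∧ a = c * (1+y) ∧ b = c*(1-y) := by
    rcases (add_nonneg hb (hb.trans hab)).eq_or_lt with h | h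
    · exact ⟨0, 0, le_rfl, le_rfl, zero_le_one, by linarith, by linarith⟩
    refine ⟨(a+b)/2, (a-b)/(a+b), by linarith, div_nonneg (by linarith) (by linarith), ?_, ?_, ?_⟩
    · rw [div_le_one] <;> linarith
    · have : a + b ≠ 0 := by linarith
      field_simp
      ring
    · have : a + b ≠ 0 := by linarith
      field_simp
      ring
  have key := two_point_norm p q y hq hqp h0 h1
  rw [← hr] at key
  have hyr : y * r ≤ 1 := mul_le_one₀ h1 hr0 hr1
  have hyr0 : 0 ≤ y * r := mul_nonneg h0 hr0
  have hom : ∀ u v t : ℝ, 0 ≤ u → 0 ≤ v → 0 < t → (((c*u)^t + (c*v)^t)/2)^(1/t) = c * ((u^t+v^t)/2)^(1/t) := by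
    intro u v t hu hv ht
    rw [Real.mul_rpow hc hu, Real.mul_rpow hc hv, ← mul_add, mul_div_assoc, Real.mul_rpow (by positivity) (by positivity),
      one_div, Real.rpow_rpow_inv hc ht.ne']
  have e1 : (1+r)/2 * (c*(1+y)) + (1-r)/2*(c*(1-y)) = c * (1 + y*r) := by ring
  have e2 : (1-r)/2 * (c*(1+y)) + (1+r)/2*(c*(1-y)) = c * (1 - y*r) := by ring
  rw [e1, e2, hom _ _ _ (by linarith) (by linarith) hp0, hom _ _ _ (by linarith) (by linarith) hq0]
  exact mul_le_mul_of_nonneg_left key hc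

theorem conv_aux (p u v l : ℝ) (hp : 1 ≤ p) (hu : 0 ≤ u) (hv : 0 ≤ v) (h0 : 0 ≤ l) (h1 : l ≤ 1) :
    (l*u + (1-l)*v)^p + ((1-l)*u + l*v)^p ≤ u^p + v^p := by
  have h := convexOn_rpow hp
  have a1 := h.2 hu hv h0 (sub_nonneg.2 h1) (by ring)
  have a2 := h.2 hu hv (sub_nonneg.2 h1) h0 (by ring)
  simp only [smul_eq_mul] at a1 a2
  linarith

theorem two_point (p q a b s : ℝ) (hq : 1 < q) (hqp : q < p) (ha : 0 ≤ a) (hb : 0 ≤ b)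
    (hs : |s| ≤ Real.sqrt ((q-1)/(p-1))) :
    ((((1 + s)/2 * a + (1 - s)/2 * b)^p
      + ((1 - s)/2 * a + (1 + s)/2 * b)^p)/2)^(1/p)
      ≤ ((a^q + b^q)/2)^(1/q) := by
  wlog hab : b ≤ a generalizing a b
  · have := this b a hb ha (le_of_not_ge hab)
    rw [add_comm (a^q)]
    refine le_trans (le_of_eq ?_) this
    congr 2
    rw [add_comm]
    congr 2 <;> ring
  refine le_trans ?_ (two_point_crit p q a b hq hqp hb hab)
  set r := Real.sqrt ((q-1)/(p-1)) with hr
  have hr0 : 0 < r := Real.sqrt_pos.2 (div_pos (by linarith) (by linarith))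
  have hr1 : r ≤ 1 := by
    rw [hr, Real.sqrt_le_one, div_le_one] <;> linarith
  obtain ⟨hs1, hs2⟩ := abs_le.1 hs
  have hu : 0 ≤ (1 + r)/2 * a + (1 - r)/2 * b :=
    add_nonneg (mul_nonneg (by linarith) ha) (mul_nonneg (by linarith) hb)
  have hv : 0 ≤ (1 - r)/2 * a + (1 + r)/2 * b :=
    add_nonneg (mul_nonneg (by linarith) ha) (mul_nonneg (by linarith) hb)
  have := conv_aux p _ _ ((r+s)/(2*r)) (by linarith) hu hv (div_nonneg (by linarith) (by linarith))
    (by rw [div_le_one] <;> linarith)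
  have e1 : (r+s)/(2*r) * ((1 + r)/2 * a + (1 - r)/2 * b) + (1 - (r+s)/(2*r)) * ((1 - r)/2 * a + (1 + r)/2 * b) = (1 + s)/2 * a + (1 - s)/2 * b := by
    field_simp; ring
  have e2 : (1 - (r+s)/(2*r)) * ((1 + r)/2 * a + (1 - r)/2 * b) + (r+s)/(2*r) * ((1 - r)/2 * a + (1 + r)/2 * b) = (1 - s)/2 * a + (1 + s)/2 * b := by
    field_simp; ring
  rw [e1, e2] at this
  have n1 : 0 ≤ (1 + s)/2 * a + (1 - s)/2 * b :=
    add_nonneg (mul_nonneg (by linarith) ha) (mul_nonneg (by linarith) hb)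
  have n2 : 0 ≤ (1 - s)/2 * a + (1 + s)/2 * b :=
    add_nonneg (mul_nonneg (by linarith) ha) (mul_nonneg (by linarith) hb)
  apply Real.rpow_le_rpow (by positivity) (by linarith) (one_div_nonneg.2 (by linarith))


theorem cheb_interp (d : ℕ) (x : ℝ) (hx : 1 ≤ x) :
    ∃ c : ℕ → ℝ, (∀ k ≤ d, ∑ j ∈ Finset.range (d+1), c j * (Polynomial.Chebyshev.node d j)^k = x^k) ∧
      ∑ j ∈ Finset.range (d+1), |c j| = (Polynomial.Chebyshev.T ℝ (d:ℤ)).eval x := by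
  set v : ℕ → ℝ := Polynomial.Chebyshev.node d with hv
  set S := Finset.range (d+1) with hS
  have hinj : Set.InjOn v S := (Polynomial.Chebyshev.strictAntiOn_node d).injOn
  have hgen : ∀ P : Polynomial ℝ, P.degree ≤ d →
      ∑ j ∈ S, (Lagrange.basis S v j).eval x * P.eval (v j) = P.eval x := by
    intro P hP
    have hdeg : P.degree < S.card := by
      rw [hS, Finset.card_range]
      refine lt_of_le_of_lt hP ?_
      exact_mod_cast Nat.lt_succ_self d
    have h := Lagrange.eq_interpolate hinj hdeg
    conv_rhs => rw [h]
    rw [Lagrange.interpolate_apply, Polynomial.eval_finsetSum]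
    refine Finset.sum_congr rfl fun j _ => ?_
    simp [mul_comm]
  refine ⟨fun j => (Lagrange.basis S v j).eval x, ?_, ?_⟩
  · intro k hk
    have := hgen (Polynomial.X ^ k) (by rw [Polynomial.degree_X_pow]; exact_mod_cast hk)
    simpa using this
  · rw [← hgen _ (by simp)]
    refine Finset.sum_congr rfl fun j hj => ?_
    have hjd : j ≤ d := Nat.lt_succ_iff.1 (Finset.mem_range.1 hj)
    rw [hv, Polynomial.Chebyshev.eval_T_real_node (Finset.mem_Iic.2 hjd), ← hv]
    have hpos := Polynomial.Chebyshev.zero_lt_prod_node_sub_node hjd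
    rw [← hv, ← hS] at hpos
    have e : (Lagrange.basis S v j).eval x = (∏ i ∈ S.erase j, (v j - v i))⁻¹ * ∏ i ∈ S.erase j, (x - v i) := by
      rw [Lagrange.basis, Polynomial.eval_prod, ← Finset.prod_inv_distrib, ← Finset.prod_mul_distrib]
      refine Finset.prod_congr rfl fun i _ => ?_
      simp [Lagrange.basisDivisor]
    have hnn : 0 ≤ ∏ i ∈ S.erase j, (x - v i) := Finset.prod_nonneg fun i _ => by
      have := (Polynomial.Chebyshev.node_mem_Icc (n := d) (i := i)).2
      rw [hv]; linarith
    beta_reduce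
    rw [e]
    set N := ∏ i ∈ S.erase j, (v j - v i)
    rcases neg_one_pow_eq_or ℝ j with h | h <;> rw [h] at hpos ⊢
    · rw [abs_of_nonneg, mul_one]
      exact mul_nonneg (inv_nonneg.2 (by linarith only [hpos])) hnn
    · rw [abs_of_nonpos]
      · ring
      · exact mul_nonpos_of_nonpos_of_nonneg (inv_nonpos.2 (by linarith only [hpos])) hnn

theorem sgn_mul_self (b : Bool) : sgn b * sgn b = 1 := by cases b <;> simp [sgn]

/-- noise operator -/
def noise {n : ℕ} (s : ℝ) (f : (Fin n → Bool) → X) : (Fin n → Bool) → X :=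
  fun ε => ∑ δ : Fin n → Bool, (∏ i, (1 + s * (sgn (ε i) * sgn (δ i)))/2) • f δ

theorem noise_one {n : ℕ} (f : (Fin n → Bool) → X) : noise 1 f = f := by
  funext ε
  rw [noise, Finset.sum_eq_single ε]
  · simp [sgn_mul_self]
  · intro δ _ hne
    obtain ⟨i, hi⟩ := Function.ne_iff.1 hne
    rw [Finset.prod_eq_zero (Finset.mem_univ i), zero_smul]
    revert hi
    cases δ i <;> cases ε i <;> simp [sgn]
  · simp

theorem noise_expand {n : ℕ} (s : ℝ) (f : (Fin n → Bool) → X) (ε : Fin n → Bool) :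
    noise s f ε = ∑ A : Finset (Fin n), s ^ A.card • walsh A ε • coeff f A := by
  have hk : ∀ δ : Fin n → Bool, (∏ i, (1 + s * (sgn (ε i) * sgn (δ i)))/2)
      = (2^n : ℝ)⁻¹ * ∑ A : Finset (Fin n), s ^ A.card * (walsh A ε * walsh A δ) := by
    intro δ
    rw [Finset.prod_div_distrib, Finset.prod_one_add]
    simp only [Finset.prod_const, Finset.card_univ, Fintype.card_fin, Finset.prod_mul_distrib, walsh, Finset.powerset_univ]
    rw [div_eq_inv_mul]
  simp only [noise, hk, coeff, Finset.mul_sum, Finset.sum_smul, Finset.smul_sum, smul_smul]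
  rw [Finset.sum_comm]
  refine Finset.sum_congr rfl fun A _ => Finset.sum_congr rfl fun δ _ => ?_
  congr 1
  ring

theorem lpNorm_nonneg {n : ℕ} (p : ℝ) (f : (Fin n → Bool) → X) : 0 ≤ lpNorm p f := by
  unfold lpNorm; positivity

theorem lpNorm_rpow {n : ℕ} (p : ℝ) (hp : 0 < p) (f : (Fin n → Bool) → X) :
    lpNorm p f ^ p = (2 ^ n : ℝ)⁻¹ * ∑ ε : Fin n → Bool, ‖f ε‖ ^ p := by
  unfold lpNorm
  rw [one_div, Real.rpow_inv_rpow (by positivity) hp.ne']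

theorem lpNorm_add {n : ℕ} (p : ℝ) (hp : 1 ≤ p) (f g : (Fin n → Bool) → X) :
    lpNorm p (fun ε => f ε + g ε) ≤ lpNorm p f + lpNorm p g := by
  unfold lpNorm
  have hp0 : 0 ≤ 1 / p := one_div_nonneg.2 (by linarith)
  rw [Real.mul_rpow (by positivity) (by positivity), Real.mul_rpow (by positivity) (by positivity),
    Real.mul_rpow (by positivity) (by positivity), ← mul_add]
  refine mul_le_mul_of_nonneg_left ?_ (by positivity)
  refine le_trans ?_ (Real.Lp_add_le_of_nonneg Finset.univ hp (fun i _ => norm_nonneg (f i)) (fun i _ => norm_nonneg (g i)))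
  refine Real.rpow_le_rpow (by positivity) (Finset.sum_le_sum fun i _ => ?_) hp0
  exact Real.rpow_le_rpow (norm_nonneg _) (norm_add_le _ _) (by linarith)

theorem lpNorm_smul {n : ℕ} (p : ℝ) (hp : 0 < p) (c : ℝ) (f : (Fin n → Bool) → X) :
    lpNorm p (fun ε => c • f ε) = |c| * lpNorm p f := by
  unfold lpNorm
  simp only [norm_smul, Real.norm_eq_abs, Real.mul_rpow (abs_nonneg c) (norm_nonneg _)]
  rw [← Finset.mul_sum, mul_left_comm, Real.mul_rpow (by positivity) (by positivity), one_div,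
    Real.rpow_rpow_inv (abs_nonneg c) hp.ne']

theorem lpNorm_sum {n : ℕ} (p : ℝ) (hp : 1 ≤ p) (S : Finset ℕ) (F : ℕ → (Fin n → Bool) → X) :
    lpNorm p (fun ε => ∑ j ∈ S, F j ε) ≤ ∑ j ∈ S, lpNorm p (F j) := by
  induction S using Finset.induction_on with
  | empty =>
    have hp0 : p ≠ 0 := by linarith
    simp [lpNorm, Real.zero_rpow hp0, hp0]
  | insert a S ha ih =>
    simp only [Finset.sum_insert ha]
    exact (lpNorm_add p hp _ _).trans (by linarith)

theorem sum_cons {n : ℕ} {Y : Type*} [AddCommMonoid Y] (F : (Fin (n+1) → Bool) → Y) :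
    ∑ ε, F ε = ∑ ε : Fin n → Bool, F (Fin.cons true ε) + ∑ ε : Fin n → Bool, F (Fin.cons false ε) := by
  rw [← (Fin.consEquiv (fun _ => Bool)).sum_comp, Fintype.sum_prod_type, Fintype.sum_bool]
  rfl

theorem lpNorm_succ {n : ℕ} (p : ℝ) (hp : 0 < p) (f : (Fin (n+1) → Bool) → X) :
    lpNorm p f = ((lpNorm p (fun ε : Fin n → Bool => f (Fin.cons true ε)) ^ p
      + lpNorm p (fun ε : Fin n → Bool => f (Fin.cons false ε)) ^ p) / 2)^(1/p) := by
  rw [lpNorm_rpow p hp, lpNorm_rpow p hp]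
  unfold lpNorm
  rw [sum_cons]
  congr 1
  rw [pow_succ]
  field_simp

theorem noise_succ {n : ℕ} (s : ℝ) (f : (Fin (n+1) → Bool) → X) (b : Bool) :
    (fun ε : Fin n → Bool => noise s f (Fin.cons b ε)) =
      noise s (fun δ : Fin n → Bool => ((1 + s * sgn b)/2) • f (Fin.cons true δ)
        + ((1 - s * sgn b)/2) • f (Fin.cons false δ)) := by
  funext ε
  simp only [noise]
  rw [sum_cons, ← Finset.sum_add_distrib]
  refine Finset.sum_congr rfl fun δ _ => ?_
  rw [smul_add, smul_smul, smul_smul, Fin.prod_univ_succ, Fin.prod_univ_succ]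
  simp only [Fin.cons_zero, Fin.cons_succ]
  congr 2
  · simp [sgn]; ring
  · simp [sgn]; ring

theorem hyper (p q s : ℝ) (hq : 1 < q) (hqp : q < p) (hs : |s| ≤ Real.sqrt ((q-1)/(p-1)))
    {n : ℕ} (f : (Fin n → Bool) → X) : lpNorm p (noise s f) ≤ lpNorm q f := by
  have hp0 : 0 < p := by linarith
  have hq0 : 0 < q := by linarith
  have hr1 : Real.sqrt ((q-1)/(p-1)) ≤ 1 := by
    rw [Real.sqrt_le_one, div_le_one] <;> linarith
  obtain ⟨hs1, hs2⟩ := abs_le.1 (hs.trans hr1)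
  induction n with
  | zero =>
    have : noise s f = f := by
      funext ε
      simp [noise]
      exact congrArg f (Subsingleton.elim _ _)
    rw [this]
    simp [lpNorm]
    exact (Real.rpow_rpow_inv (norm_nonneg _) hp0.ne').le.trans (Real.rpow_rpow_inv (norm_nonneg _) hq0.ne').ge
  | succ n ih =>
    rw [lpNorm_succ p hp0, lpNorm_succ q hq0, noise_succ, noise_succ]
    set f1 := fun ε : Fin n → Bool => f (Fin.cons true ε)
    set f2 := fun ε : Fin n → Bool => f (Fin.cons false ε)
    refine le_trans ?_ (two_point p q _ _ s hq hqp (lpNorm_nonneg q f1) (lpNorm_nonneg q f2) hs)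
    have hb : ∀ x y : ℝ, 0 ≤ x → 0 ≤ y → lpNorm p (noise s (fun δ => x • f1 δ + y • f2 δ)) ≤ x * lpNorm q f1 + y * lpNorm q f2 := by
      intro x y hx hy
      refine (ih _).trans ((lpNorm_add q hq.le _ _).trans ?_)
      rw [lpNorm_smul q hq0, lpNorm_smul q hq0, abs_of_nonneg hx, abs_of_nonneg hy]
    have b1 := hb ((1 + s)/2) ((1 - s)/2) (by linarith) (by linarith)
    have b2 := hb ((1 - s)/2) ((1 + s)/2) (by linarith) (by linarith)
    have e1 : (1 + s * sgn true) = 1 + s := by simp [sgn]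
    have e2 : (1 - s * sgn true) = 1 - s := by simp [sgn]
    have e3 : (1 + s * sgn false) = 1 - s := by simp [sgn]; ring
    have e4 : (1 - s * sgn false) = 1 + s := by simp [sgn]
    rw [e1, e2, e3, e4]
    have n1 := lpNorm_nonneg p (noise s (fun δ => ((1+s)/2) • f1 δ + ((1-s)/2) • f2 δ))
    have n2 := lpNorm_nonneg p (noise s (fun δ => ((1-s)/2) • f1 δ + ((1+s)/2) • f2 δ))
    apply Real.rpow_le_rpow (by positivity) _ (by positivity)
    have c1 := Real.rpow_le_rpow n1 b1 hp0.le
    have c2 := Real.rpow_le_rpow n2 b2 hp0.le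
    exact div_le_div_of_nonneg_right (add_le_add c1 c2) (by norm_num)

/-- **Corollary (moment comparison).** For `p > q > 1` and `f` of degree at most `d`,
`‖f‖_p ≤ T_d(√((p-1)/(q-1))) ‖f‖_q`. -/
theorem stmt1 {X : Type*} [NormedAddCommGroup X] [NormedSpace ℂ X] [CompleteSpace X]
    (n d : ℕ) (hd : 1 ≤ d) (hdn : d ≤ n) (p q : ℝ) (hq : 1 < q) (hqp : q < p)
    (f : (Fin n → Bool) → X) (hf : degLE f d) :
    lpNorm p f ≤
      (Polynomial.Chebyshev.T ℝ (d : ℤ)).eval (Real.sqrt ((p - 1) / (q - 1))) *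
        lpNorm q f := by
  set x := Real.sqrt ((p - 1) / (q - 1)) with hx
  have hx1 : 1 ≤ x := by
    rw [hx, Real.one_le_sqrt, one_le_div] <;> linarith
  have hxr : Real.sqrt ((q-1)/(p-1)) = x⁻¹ := by
    rw [hx, ← Real.sqrt_inv, inv_div]
  have hx0 : 0 < x := by linarith
  obtain ⟨c, hc1, hc2⟩ := cheb_interp d x hx1
  set r : ℕ → ℝ := fun j => x⁻¹ * Polynomial.Chebyshev.node d j with hr
  have hrep : f = fun ε => ∑ j ∈ Finset.range (d+1), c j • noise (r j) f ε := by
    funext ε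
    conv_lhs => rw [← noise_one f]
    simp only [noise_expand, Finset.smul_sum]
    rw [Finset.sum_comm]
    refine Finset.sum_congr rfl fun A _ => ?_
    by_cases hA : A.card ≤ d
    · simp only [smul_smul (c _)]
      rw [← Finset.sum_smul]
      congr 1
      simp only [hr, mul_pow, one_pow]
      have := hc1 _ hA
      calc (1:ℝ) = (x⁻¹)^A.card * x^A.card := by rw [← mul_pow, inv_mul_cancel₀ hx0.ne', one_pow]
        _ = _ := by
          rw [← this, Finset.mul_sum]
          exact Finset.sum_congr rfl fun j _ => by ring
    · simp [hf A (not_le.1 hA)]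
  have hp1 : 1 ≤ p := by linarith
  rw [← hc2, Finset.sum_mul]
  conv_lhs => rw [hrep]
  refine (lpNorm_sum p hp1 _ _).trans (Finset.sum_le_sum fun j _ => ?_)
  rw [lpNorm_smul p (by linarith)]
  refine mul_le_mul_of_nonneg_left (hyper p q _ hq hqp ?_ f) (abs_nonneg _)
  rw [hxr, hr]
  have hn := Polynomial.Chebyshev.node_mem_Icc (n := d) (i := j)
  rw [abs_mul, abs_of_pos (inv_pos.2 hx0)]
  exact mul_le_of_le_one_right (inv_pos.2 hx0).le (abs_le.2 hn)

end HammingCube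
end
end

section
/- Let X be a complex Banach space, n,d ∈ ℕ with 1 ≤ d ≤ n, and p ∈ [1,∞). Then every function f : {-1,1}^n → X of degree at most d satisfies ‖f − 2^{-n} Σ_{δ ∈ {-1,1}^n} f(δ)‖_{L_p({-1,1}^n;X)} ≤ 3(log d + 1) · (2^{-n} Σ_{δ ∈ {-1,1}^n} ‖Σ_{i=1}^n δ_i ∂_i f‖_{L_p({-1,1}^n;X)}^p)^{1/p}. -/
open scoped BigOperators ENNReal NNReal

noncomputable section

namespace HammingCube

variable {X : Type*} [NormedAddCommGroup X] [NormedSpace ℂ X]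

open Polynomial in
theorem scalar_growth (P : ℝ[X]) (h0 : P.eval 0 = 0) (K : ℝ)
    (hK : ∀ r : ℝ, 0 ≤ r → r < 1 → (1 - r) * |P.derivative.eval r| ≤ K)
    (x : ℝ) (hx0 : 0 ≤ x) (hx1 : x < 1) : |P.eval x| ≤ K * (-Real.log (1 - x)) := by
  have hB : ∀ y : ℝ, y < 1 → HasDerivAt (fun y => K * (-Real.log (1 - y))) (K * (1 / (1 - y))) y := by
    intro y hy
    have h1 : HasDerivAt (fun y : ℝ => 1 - y) (-1) y := by
      simpa using (hasDerivAt_id y).const_sub 1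
    have := ((h1.log (by linarith)).neg).const_mul K
    rw [show K * (1 / (1 - y)) = K * -(-1 / (1 - y)) by ring]
    exact this
  have := image_norm_le_of_norm_deriv_right_le_deriv_boundary' (f := fun y => P.eval y)
    (f' := fun y => P.derivative.eval y) (a := 0) (b := x)
    (B := fun y => K * (-Real.log (1 - y))) (B' := fun y => K * (1 / (1 - y)))
    P.continuous.continuousOn (fun y _ => (P.hasDerivAt y).hasDerivWithinAt)
    (by simp [h0])
    (fun y hy => (hB y (lt_of_le_of_lt hy.2 hx1)).continuousAt.continuousWithinAt)
    (fun y hy => (hB y (hy.2.trans hx1)).hasDerivWithinAt)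
    (by
      intro y hy
      have h := hK y hy.1 (hy.2.trans hx1)
      have h1 : 0 < 1 - y := by linarith [hy.2]
      rw [Real.norm_eq_abs, mul_one_div, le_div_iff₀ h1]; linarith)
    (x := x) ⟨hx0, le_rfl⟩
  simpa using this

open Polynomial in
theorem scalar_main (d : ℕ) (hd : 1 ≤ d) (P : ℝ[X]) (hdeg : P.degree ≤ d) (h0 : P.eval 0 = 0)
    (K : ℝ) (hK0 : 0 ≤ K)
    (hK : ∀ r : ℝ, |r| < 1 → (1 - |r|) * |P.derivative.eval r| ≤ K) :
    P.eval 1 ≤ 3 * (Real.log d + 1) * K := by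
  have hdR : (1 : ℝ) ≤ d := by exact_mod_cast hd
  have hlog : 0 ≤ Real.log d := Real.log_nonneg hdR
  set θ : ℝ := (3/4) / d with hθ
  have hθ0 : 0 < θ := by positivity
  set y : ℝ := Real.cosh θ with hy
  have hy1 : 1 < y := Real.one_lt_cosh.mpr hθ0.ne'
  have hysq : 1 + θ ^ 2 / 2 ≤ y := by
    have h1 : y = 1 + 2 * Real.sinh (θ/2) ^ 2 := by
      rw [hy, show θ = 2 * (θ/2) by ring, Real.cosh_two_mul, Real.cosh_sq]; ring_nf
    have h2 : θ/2 ≤ Real.sinh (θ/2) := Real.self_le_sinh_iff.mpr (by positivity)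
    nlinarith
  -- log bound
  have hexp : Real.exp (-2) ≤ 0.14 := by
    rw [Real.exp_neg, show (2:ℝ) = 1 + 1 by norm_num, Real.exp_add]
    have := Real.exp_one_gt_d9
    rw [inv_le_comm₀ (by positivity) (by norm_num)]
    norm_num
    nlinarith
  have hlogb : -Real.log (1 - y⁻¹) ≤ 2 * (Real.log d + 1) := by
    have hpos : 0 < Real.exp (-2) / (d:ℝ)^2 := by positivity
    have h1 : Real.exp (-2) / (d:ℝ)^2 ≤ 1 - y⁻¹ := by
      have h2 : y⁻¹ ≤ (1 + θ^2/2)⁻¹ := inv_anti₀ (by positivity) hysq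
      have h3 : (1 + θ^2/2)⁻¹ ≤ 1 - 0.14 / (d:ℝ)^2 := by
        rw [inv_le_iff_one_le_mul₀ (by positivity), hθ]
        have : (0:ℝ) < d := by linarith
        have hs : (1:ℝ) / (d:ℝ)^2 ≤ 1 := by
          rw [div_le_one (by positivity)]; nlinarith
        have hs0 : (0:ℝ) < 1 / (d:ℝ)^2 := by positivity
        have e1 : (3/4 / (d:ℝ))^2 = 9/16 * (1 / (d:ℝ)^2) := by field_simp; norm_num
        have e2 : 0.14 / (d:ℝ)^2 = 0.14 * (1 / (d:ℝ)^2) := by ring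
        rw [e1, e2]
        nlinarith
      have h4 : Real.exp (-2) / (d:ℝ)^2 ≤ 0.14 / (d:ℝ)^2 := by gcongr
      linarith
    have h5 := Real.log_le_log hpos h1
    rw [Real.log_div (by positivity) (by positivity), Real.log_exp, Real.log_pow] at h5
    push_cast at h5
    linarith
  have hgrow : ∀ x : ℝ, |x| < 1 → |P.eval x| ≤ K * (-Real.log (1 - |x|)) := by
    intro x hx
    rcases le_total 0 x with h | h
    · rw [abs_of_nonneg h] at hx ⊢
      refine scalar_growth P h0 K ?_ x h hx
      intro r hr0 hr1
      have := hK r (by rwa [abs_of_nonneg hr0])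
      rwa [abs_of_nonneg hr0] at this
    · rw [abs_of_nonpos h] at hx ⊢
      have := scalar_growth (P.comp (-X)) (by simpa using h0) K ?_ (-x) (by linarith) hx
      · simpa using this
      intro r hr0 hr1
      have := hK (-r) (by rwa [abs_neg, abs_of_nonneg hr0])
      rw [abs_neg, abs_of_nonneg hr0] at this
      simpa [derivative_comp] using this
  set M : ℝ := 2 * (Real.log d + 1) * K with hM
  have hM0 : 0 ≤ M := by positivity
  -- scaled polynomial
  have hbd : ∀ x ∈ Set.Icc (-1:ℝ) 1, |(P.comp (C y⁻¹ * X)).eval x| ≤ M := by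
    intro x hx
    have hxa : |x| ≤ 1 := abs_le.mpr hx
    have hyi : y⁻¹ < 1 := inv_lt_one_of_one_lt₀ hy1
    have hyp : 0 < y⁻¹ := by positivity
    have hle : |y⁻¹ * x| ≤ y⁻¹ := by
      rw [abs_mul, abs_of_pos hyp]; nlinarith
    have h1 := hgrow (y⁻¹ * x) (lt_of_le_of_lt hle hyi)
    have h2 : -Real.log (1 - |y⁻¹ * x|) ≤ -Real.log (1 - y⁻¹) := by
      apply neg_le_neg
      apply Real.log_le_log <;> linarith
    simp only [eval_comp, eval_mul, eval_C, eval_X]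
    calc _ ≤ _ := h1
      _ ≤ K * (2 * (Real.log d + 1)) := by gcongr; linarith
      _ = M := by rw [hM]; ring
  have hdegc : (P.comp (C y⁻¹ * X)).degree ≤ d := by
    rw [← natDegree_le_iff_degree_le] at hdeg ⊢
    refine natDegree_comp_le.trans ?_
    have : (C y⁻¹ * X : ℝ[X]).natDegree ≤ 1 := natDegree_le_of_degree_le (degree_C_mul_X_le _)
    nlinarith
  have hcosh : Real.cosh (d * θ) ≤ 3/2 := by
    have : (d:ℝ) * θ = 3/4 := by rw [hθ]; field_simp
    rw [this]
    refine (Real.cosh_le_exp_half_sq _).trans ?_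
    have h := Real.exp_bound' (x := (3/4)^2/2) (by norm_num) (by norm_num) (n := 4) (by norm_num)
    refine h.trans ?_
    norm_num [Finset.sum_range_succ, Nat.factorial]
  have hev : (P.comp (C y⁻¹ * X)).eval y = P.eval 1 := by
    simp [eval_comp, inv_mul_cancel₀ (show y ≠ 0 by linarith)]
  -- slightly larger constants
  have key : ∀ M' : ℝ, M < M' → P.eval 1 ≤ M' * (3/2) := by
    intro M' hM'
    have hM'0 : 0 < M' := lt_of_le_of_lt hM0 hM'
    have := Polynomial.Chebyshev.eval_iterate_derivative_le_of_forall_abs_le_one (n := d)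
      (P := C M'⁻¹ * (P.comp (C y⁻¹ * X))) (k := 0) (x := y) hy1.le
      ((degree_C_mul (inv_ne_zero hM'0.ne')).le.trans hdegc) (by
        intro x hx
        rw [eval_mul, eval_C, abs_mul, abs_of_pos (by positivity), inv_mul_le_iff₀ hM'0]
        linarith [hbd x hx])
    simp only [Function.iterate_zero, id] at this
    rw [eval_mul, eval_C, hev, hy, Chebyshev.T_real_cosh, inv_mul_le_iff₀ hM'0] at this
    refine this.trans ?_
    gcongr
    exact_mod_cast hcosh
  have : P.eval 1 ≤ M * (3/2) := by
    apply le_of_forall_pos_le_add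
    intro e he
    have := key (M + e/2) (by linarith)
    linarith
  rw [hM] at this
  linarith

theorem sgn_not (b : Bool) : sgn (!b) = - sgn b := by cases b <;> simp [sgn]

theorem sgn_beq (a b : Bool) : sgn (a == b) = sgn a * sgn b := by cases a <;> cases b <;> simp [sgn]

theorem sum_walsh_mul {n : ℕ} (ε δ : Fin n → Bool) :
    ∑ A : Finset (Fin n), walsh A ε * walsh A δ = if ε = δ then (2 ^ n : ℝ) else 0 := by
  have h : ∑ A : Finset (Fin n), walsh A ε * walsh A δ = ∏ i : Fin n, (1 + sgn (ε i) * sgn (δ i)) := by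
    rw [Finset.prod_one_add, Finset.powerset_univ]
    simp [walsh, Finset.prod_mul_distrib]
  rw [h]
  split_ifs with hc
  · subst hc
    simp only [sgn_mul_self]
    norm_num
  · obtain ⟨i, hi⟩ := Function.ne_iff.mp hc
    apply Finset.prod_eq_zero (Finset.mem_univ i)
    revert hi
    cases ε i <;> cases δ i <;> simp [sgn]

theorem walsh_inversion {n : ℕ} (f : (Fin n → Bool) → X) (ε : Fin n → Bool) :
    f ε = ∑ A : Finset (Fin n), walsh A ε • coeff f A := by
  have h : ∑ A : Finset (Fin n), walsh A ε • coeff f A =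
      ∑ δ : Fin n → Bool, ((2 ^ n : ℝ)⁻¹ * ∑ A : Finset (Fin n), walsh A ε * walsh A δ) • f δ := by
    simp only [coeff, Finset.smul_sum, Finset.mul_sum, Finset.sum_smul, smul_smul]
    rw [Finset.sum_comm]
    refine Finset.sum_congr rfl fun δ _ => Finset.sum_congr rfl fun A _ => ?_
    congr 1; ring
  rw [h]
  simp [sum_walsh_mul]

theorem walsh_update {n : ℕ} (A : Finset (Fin n)) (ε : Fin n → Bool) (i : Fin n) :
    walsh A (Function.update ε i (!(ε i))) = if i ∈ A then - walsh A ε else walsh A ε := by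
  unfold walsh
  split_ifs with h
  · rw [← Finset.mul_prod_erase A _ h, ← Finset.mul_prod_erase A _ h]
    rw [Function.update_self, sgn_not, neg_mul]
    congr 2
    refine Finset.prod_congr rfl fun j hj => ?_
    rw [Function.update_of_ne (Finset.ne_of_mem_erase hj)]
  · refine Finset.prod_congr rfl fun j hj => ?_
    rw [Function.update_of_ne (by rintro rfl; exact h hj)]

theorem pderiv_walsh {n : ℕ} (f : (Fin n → Bool) → X) (i : Fin n) (ε : Fin n → Bool) :
    pderiv i f ε = ∑ A : Finset (Fin n), if i ∈ A then walsh A ε • coeff f A else 0 := by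
  unfold pderiv
  rw [walsh_inversion f ε, walsh_inversion f (Function.update ε i (!(ε i))),
    ← Finset.sum_sub_distrib, Finset.smul_sum]
  refine Finset.sum_congr rfl fun A _ => ?_
  rw [walsh_update]
  split_ifs with h
  · rw [neg_smul, sub_neg_eq_add, ← two_smul ℝ, smul_smul]; norm_num
  · simp

/-- mixing of two points of the cube -/
def mix {n : ℕ} (b ε η : Fin n → Bool) : Fin n → Bool := fun j => if b j then ε j else η j

/-- weight of `b` -/
def wt {n : ℕ} (r : ℝ) (b : Fin n → Bool) : ℝ := ∏ j, (if b j then r else 1 - r)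

/-- the decoupled gradient -/
def dec {n : ℕ} (f : (Fin n → Bool) → X) (ε δ : Fin n → Bool) : X :=
  ∑ i : Fin n, (sgn (δ i) * sgn (ε i)) • pderiv i f ε

/-- derivative of the heat flow in `r` -/
def dheat {n : ℕ} (f : (Fin n → Bool) → X) (r : ℝ) (ε : Fin n → Bool) : X :=
  ∑ A : Finset (Fin n), ((A.card : ℝ) * r ^ (A.card - 1)) • walsh A ε • coeff f A

theorem sum_prod_mix {n : ℕ} (g : Fin n → Bool → Bool → ℝ) :
    ∑ b : Fin n → Bool, ∑ η : Fin n → Bool, ∏ j, g j (b j) (η j) =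
      ∏ j, ∑ x : Bool, ∑ y : Bool, g j x y := by
  have h : ∀ b : Fin n → Bool, ∑ η : Fin n → Bool, ∏ j, g j (b j) (η j) =
      ∏ j, ∑ y : Bool, g j (b j) y := by
    intro b
    rw [Fintype.prod_sum]
  simp only [h]
  rw [Fintype.prod_sum]

theorem wt_sum {n : ℕ} (r : ℝ) :
    ∑ b : Fin n → Bool, ∑ _η : Fin n → Bool, wt r b * (2 ^ n : ℝ)⁻¹ = 1 := by
  have := sum_prod_mix (n := n) (fun _ x _ => (if x then r else 1 - r) * (2:ℝ)⁻¹)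
  simp only [Finset.prod_mul_distrib, Finset.prod_const, Finset.card_univ, Fintype.card_fin,
    inv_pow] at this
  unfold wt
  rw [this]
  simp
  try ring_nf

theorem mix_scalar {n : ℕ} (r : ℝ) (A : Finset (Fin n)) (i : Fin n) (hi : i ∈ A)
    (ε : Fin n → Bool) :
    ∑ b : Fin n → Bool, ∑ η : Fin n → Bool, (wt r b * (2 ^ n : ℝ)⁻¹) *
      ((sgn (mix b η ε i) * sgn (mix b ε η i)) * walsh A (mix b ε η)) =
      (1 - r) * (r ^ (A.card - 1) * walsh A ε) := by
  have hg := sum_prod_mix (n := n) (fun j x y => ((if x then r else 1 - r) * (2:ℝ)⁻¹) *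
    (if j = i then sgn (if x then y else ε j) else
      if j ∈ A then sgn (if x then ε j else y) else 1))
  have hL : ∀ b η : Fin n → Bool, (wt r b * (2 ^ n : ℝ)⁻¹) *
      ((sgn (mix b η ε i) * sgn (mix b ε η i)) * walsh A (mix b ε η)) =
      ∏ j, (((if b j then r else 1 - r) * (2:ℝ)⁻¹) *
    (if j = i then sgn (if b j then η j else ε j) else
      if j ∈ A then sgn (if b j then ε j else η j) else 1)) := by
    intro b η
    rw [Finset.prod_mul_distrib, Finset.prod_mul_distrib, Finset.prod_const, Finset.card_univ,
      Fintype.card_fin, inv_pow, wt]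
    congr 1
    rw [← Finset.mul_prod_erase Finset.univ _ (Finset.mem_univ i), if_pos rfl, walsh,
      ← Finset.mul_prod_erase A _ hi, mul_assoc, ← mul_assoc (sgn (mix b ε η i)), sgn_mul_self,
      one_mul]
    congr 1
    rw [← Finset.prod_filter_mul_prod_filter_not (Finset.univ.erase i) (· ∈ A)]
    rw [Finset.prod_eq_one (s := (Finset.univ.erase i).filter (¬ · ∈ A)), mul_one]
    · have : (Finset.univ.erase i).filter (· ∈ A) = A.erase i := by ext; simp
      rw [this]
      refine Finset.prod_congr rfl fun j hj => ?_
      rw [Finset.mem_erase] at hj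
      rw [if_neg hj.1, if_pos hj.2]; rfl
    · intro j hj
      simp only [Finset.mem_filter, Finset.mem_erase] at hj
      rw [if_neg hj.1.1, if_neg hj.2]
  simp only [hL]
  rw [hg]
  have hR : ∀ j : Fin n, (∑ x : Bool, ∑ y : Bool, ((if x then r else 1 - r) * (2:ℝ)⁻¹) *
    (if j = i then sgn (if x then y else ε j) else
      if j ∈ A then sgn (if x then ε j else y) else 1)) =
      if j = i then (1 - r) * sgn (ε j) else if j ∈ A then r * sgn (ε j) else 1 := by
    intro j
    split_ifs
    · cases ε j <;> simp [sgn] <;> ring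
    · cases ε j <;> simp [sgn] <;> ring
    · simp; ring_nf
  simp only [hR]
  rw [← Finset.mul_prod_erase Finset.univ _ (Finset.mem_univ i), if_pos rfl, walsh,
      ← Finset.mul_prod_erase A _ hi]
  rw [← Finset.prod_filter_mul_prod_filter_not (Finset.univ.erase i) (· ∈ A)]
  rw [Finset.prod_eq_one (s := (Finset.univ.erase i).filter (¬ · ∈ A)), mul_one]
  · have : (Finset.univ.erase i).filter (· ∈ A) = A.erase i := by ext; simp
    rw [this]
    have : ∀ j ∈ A.erase i, (if j = i then (1 - r) * sgn (ε j) else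
        if j ∈ A then r * sgn (ε j) else 1) = r * sgn (ε j) := by
      intro j hj
      rw [Finset.mem_erase] at hj
      rw [if_neg hj.1, if_pos hj.2]
    rw [Finset.prod_congr rfl this, Finset.prod_mul_distrib, Finset.prod_const,
      Finset.card_erase_of_mem hi]
    ring
  · intro j hj
    simp only [Finset.mem_filter, Finset.mem_erase] at hj
    rw [if_neg hj.1.1, if_neg hj.2]

theorem dheat_identity {n : ℕ} (f : (Fin n → Bool) → X) (r : ℝ) (ε : Fin n → Bool) :
    ∑ b : Fin n → Bool, ∑ η : Fin n → Bool, (wt r b * (2 ^ n : ℝ)⁻¹) •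
      dec f (mix b ε η) (mix b η ε) = (1 - r) • dheat f r ε := by
  have h1 : ∀ b η : Fin n → Bool, (wt r b * (2 ^ n : ℝ)⁻¹) • dec f (mix b ε η) (mix b η ε) =
      ∑ i : Fin n, ∑ A : Finset (Fin n), if i ∈ A then ((wt r b * (2 ^ n : ℝ)⁻¹) *
      ((sgn (mix b η ε i) * sgn (mix b ε η i)) * walsh A (mix b ε η))) • coeff f A else 0 := by
    intro b η
    simp only [dec, pderiv_walsh, Finset.smul_sum, smul_ite, smul_zero, smul_smul, mul_assoc]
  simp only [h1]
  have h2 : ∀ b : Fin n → Bool, (∑ η : Fin n → Bool, ∑ i : Fin n, ∑ A : Finset (Fin n),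
      if i ∈ A then ((wt r b * (2 ^ n : ℝ)⁻¹) *
      ((sgn (mix b η ε i) * sgn (mix b ε η i)) * walsh A (mix b ε η))) • coeff f A else 0) =
      ∑ i : Fin n, ∑ A : Finset (Fin n), ∑ η : Fin n → Bool,
      if i ∈ A then ((wt r b * (2 ^ n : ℝ)⁻¹) *
      ((sgn (mix b η ε i) * sgn (mix b ε η i)) * walsh A (mix b ε η))) • coeff f A else 0 := by
    intro b
    rw [Finset.sum_comm]
    refine Finset.sum_congr rfl fun i _ => Finset.sum_comm
  simp only [h2]
  rw [Finset.sum_comm]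
  have h3 : ∀ i : Fin n, (∑ b : Fin n → Bool, ∑ A : Finset (Fin n), ∑ η : Fin n → Bool,
      if i ∈ A then ((wt r b * (2 ^ n : ℝ)⁻¹) *
      ((sgn (mix b η ε i) * sgn (mix b ε η i)) * walsh A (mix b ε η))) • coeff f A else 0) =
      ∑ A : Finset (Fin n), if i ∈ A then
        ((1 - r) * (r ^ (A.card - 1) * walsh A ε)) • coeff f A else 0 := by
    intro i
    rw [Finset.sum_comm]
    refine Finset.sum_congr rfl fun A _ => ?_
    split_ifs with hi
    · rw [← mix_scalar r A i hi ε]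
      simp only [Finset.sum_smul]
    · simp
  simp only [h3]
  rw [Finset.sum_comm, dheat, Finset.smul_sum]
  refine Finset.sum_congr rfl fun A _ => ?_
  rw [← Finset.sum_filter, Finset.sum_const, Finset.filter_univ_mem, ← Nat.cast_smul_eq_nsmul ℝ,
    smul_smul, smul_smul, smul_smul]
  congr 1; ring

/-- the total energy -/
def energy {n : ℕ} (p : ℝ) (f : (Fin n → Bool) → X) : ℝ :=
  ∑ ε : Fin n → Bool, ∑ δ : Fin n → Bool, ‖∑ i : Fin n, sgn (δ i) • pderiv i f ε‖ ^ p

theorem dec_energy {n : ℕ} (p : ℝ) (f : (Fin n → Bool) → X) :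
    ∑ ε : Fin n → Bool, ∑ δ : Fin n → Bool, ‖dec f ε δ‖ ^ p = energy p f := by
  unfold energy
  refine Finset.sum_congr rfl fun ε _ => ?_
  have hinv : Function.Involutive (fun (δ : Fin n → Bool) (i : Fin n) => (δ i == ε i)) := by
    intro δ; funext i
    cases h1 : δ i <;> cases h2 : ε i <;> simp [h1, h2]
  rw [← Equiv.sum_comp hinv.toPerm]
  refine Finset.sum_congr rfl fun δ _ => ?_
  simp only [Function.Involutive.coe_toPerm, dec, sgn_beq]
  congr 2
  refine Finset.sum_congr rfl fun i _ => ?_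
  rw [mul_assoc, sgn_mul_self, mul_one]

theorem mix_energy {n : ℕ} (p : ℝ) (f : (Fin n → Bool) → X) (b : Fin n → Bool) :
    ∑ ε : Fin n → Bool, ∑ η : Fin n → Bool, ‖dec f (mix b ε η) (mix b η ε)‖ ^ p = energy p f := by
  rw [← dec_energy, ← Fintype.sum_prod_type', ← Fintype.sum_prod_type']
  have hinv : Function.Involutive (fun q : (Fin n → Bool) × (Fin n → Bool) =>
      (mix b q.1 q.2, mix b q.2 q.1)) := by
    rintro ⟨ε, η⟩
    ext i <;> simp only [mix] <;> split_ifs <;> rfl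
  exact Equiv.sum_comp hinv.toPerm (fun q : (Fin n → Bool) × (Fin n → Bool) => ‖dec f q.1 q.2‖ ^ p)

theorem wt_nonneg {n : ℕ} (r : ℝ) (h0 : 0 ≤ r) (h1 : r ≤ 1) (b : Fin n → Bool) : 0 ≤ wt r b := by
  refine Finset.prod_nonneg fun j _ => ?_
  split_ifs <;> linarith

theorem dheat_pow_bound {n : ℕ} (p : ℝ) (hp : 1 ≤ p) (f : (Fin n → Bool) → X) (r : ℝ)
    (h0 : 0 ≤ r) (h1 : r ≤ 1) :
    ∑ ε : Fin n → Bool, ‖(1 - r) • dheat f r ε‖ ^ p ≤ (2 ^ n : ℝ)⁻¹ * energy p f := by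
  have hw : ∀ b : Fin n → Bool, 0 ≤ wt r b * (2 ^ n : ℝ)⁻¹ := fun b =>
    mul_nonneg (wt_nonneg r h0 h1 b) (by positivity)
  have hj : ∀ ε : Fin n → Bool, ‖(1 - r) • dheat f r ε‖ ^ p ≤
      ∑ b : Fin n → Bool, ∑ η : Fin n → Bool, (wt r b * (2 ^ n : ℝ)⁻¹) *
        ‖dec f (mix b ε η) (mix b η ε)‖ ^ p := by
    intro ε
    rw [← dheat_identity, ← Fintype.sum_prod_type', ← Fintype.sum_prod_type']
    have hb : ‖∑ q : (Fin n → Bool) × (Fin n → Bool), (wt r q.1 * (2 ^ n : ℝ)⁻¹) •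
        dec f (mix q.1 ε q.2) (mix q.1 q.2 ε)‖ ≤
        ∑ q : (Fin n → Bool) × (Fin n → Bool), (wt r q.1 * (2 ^ n : ℝ)⁻¹) *
        ‖dec f (mix q.1 ε q.2) (mix q.1 q.2 ε)‖ := by
      refine (norm_sum_le _ _).trans (Finset.sum_le_sum fun q _ => ?_)
      rw [norm_smul, Real.norm_of_nonneg (hw _)]
    refine (Real.rpow_le_rpow (norm_nonneg _) hb (by linarith)).trans ?_
    refine Real.rpow_arith_mean_le_arith_mean_rpow _ _ _ (fun q _ => hw _) ?_
      (fun q _ => norm_nonneg _) hp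
    rw [← wt_sum (n := n) r, ← Fintype.sum_prod_type']
  refine (Finset.sum_le_sum fun ε _ => hj ε).trans ?_
  rw [Finset.sum_comm]
  have h3 : ∀ b : Fin n → Bool, (∑ ε : Fin n → Bool, ∑ η : Fin n → Bool, (wt r b * (2 ^ n : ℝ)⁻¹) *
        ‖dec f (mix b ε η) (mix b η ε)‖ ^ p) = (wt r b * (2 ^ n : ℝ)⁻¹) * energy p f := by
    intro b
    rw [← mix_energy p f b]
    simp only [Finset.mul_sum]
  simp only [h3]
  rw [← Finset.sum_mul]
  apply le_of_eq
  congr 1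
  have h4 := wt_sum (n := n) r
  simp only [Finset.sum_const, Finset.card_univ, Fintype.card_pi, Fintype.card_bool,
    Finset.prod_const, Fintype.card_fin, nsmul_eq_mul] at h4
  rw [← Finset.mul_sum] at h4
  push_cast at h4
  exact eq_inv_of_mul_eq_one_right h4

theorem walsh_flip {n : ℕ} (A : Finset (Fin n)) (ε : Fin n → Bool) :
    walsh A (fun i => !(ε i)) = (-1) ^ A.card * walsh A ε := by
  simp only [walsh, sgn_not]
  rw [← Finset.prod_const, ← Finset.prod_mul_distrib]
  simp

theorem dheat_neg {n : ℕ} (f : (Fin n → Bool) → X) (r : ℝ) (ε : Fin n → Bool) :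
    dheat f (-r) ε = - dheat f r (fun i => !(ε i)) := by
  unfold dheat
  rw [← Finset.sum_neg_distrib]
  refine Finset.sum_congr rfl fun A _ => ?_
  rw [walsh_flip, smul_smul, smul_smul, ← neg_smul]
  congr 1
  rcases Nat.eq_zero_or_pos A.card with h | h
  · simp [h]
  · obtain ⟨k, hk⟩ : ∃ k, A.card = k + 1 := ⟨A.card - 1, by omega⟩
    rw [hk, Nat.add_sub_cancel, neg_pow r, pow_succ]
    ring_nf

theorem dheat_pow_bound' {n : ℕ} (p : ℝ) (hp : 1 ≤ p) (f : (Fin n → Bool) → X) (r : ℝ)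
    (h1 : |r| ≤ 1) :
    ∑ ε : Fin n → Bool, ‖(1 - |r|) • dheat f r ε‖ ^ p ≤ (2 ^ n : ℝ)⁻¹ * energy p f := by
  rcases le_total 0 r with h | h
  · rw [abs_of_nonneg h] at h1 ⊢
    exact dheat_pow_bound p hp f r h h1
  · rw [abs_of_nonpos h] at h1 ⊢
    have := dheat_pow_bound p hp f (-r) (by linarith) h1
    have hinv : Function.Involutive (fun (δ : Fin n → Bool) (i : Fin n) => !(δ i)) := by
      intro δ; funext i; simp
    rw [← Equiv.sum_comp hinv.toPerm] at this
    refine le_trans (le_of_eq ?_) this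
    refine Finset.sum_congr rfl fun ε _ => ?_
    have h2 := dheat_neg f (-r) ε
    rw [neg_neg] at h2
    rw [h2, smul_neg, norm_neg]
    rfl

open Polynomial in
theorem final_bound (n d : ℕ) (hd : 1 ≤ d) (p : ℝ) (hp : 1 ≤ p)
    (f : (Fin n → Bool) → X) (hf : degLE f d) :
    (∑ ε : Fin n → Bool, ‖f ε - (2 ^ n : ℝ)⁻¹ • ∑ δ : Fin n → Bool, f δ‖ ^ p) ^ (1 / p) ≤
      3 * (Real.log d + 1) * ((2 ^ n : ℝ)⁻¹ * energy p f) ^ (1 / p) := by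
  have hp0 : 0 < p := by linarith
  have : Fact (1 ≤ ENNReal.ofReal p) := ⟨by simpa using ENNReal.ofReal_le_ofReal hp⟩
  have htr : (ENNReal.ofReal p).toReal = p := ENNReal.toReal_ofReal hp0.le
  let V := PiLp (ENNReal.ofReal p) (fun _ : Fin n → Bool => X)
  have hnorm : ∀ g : (Fin n → Bool) → X,
      ‖(WithLp.toLp (ENNReal.ofReal p) g : V)‖ = (∑ ε, ‖g ε‖ ^ p) ^ (1 / p) := by
    intro g
    rw [PiLp.norm_eq_sum (by rw [htr]; exact hp0), htr]
  have hen : 0 ≤ (2 ^ n : ℝ)⁻¹ * energy p f := by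
    refine mul_nonneg (by positivity) (Finset.sum_nonneg fun _ _ => Finset.sum_nonneg fun _ _ => ?_)
    positivity
  rw [← hnorm]
  obtain ⟨φ, hφ1, hφ2⟩ := exists_dual_vector'' ℝ (WithLp.toLp (ENNReal.ofReal p)
    (fun ε => f ε - (2 ^ n : ℝ)⁻¹ • ∑ δ : Fin n → Bool, f δ) : V)
  let ψ : ((Fin n → Bool) → X) →ₗ[ℝ] ℝ :=
    φ.toLinearMap ∘ₗ (WithLp.linearEquiv (ENNReal.ofReal p) ℝ ((Fin n → Bool) → X)).symm.toLinearMap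
  have hψ : ∀ g, ψ g = φ (WithLp.toLp (ENNReal.ofReal p) g) := fun g => rfl
  let a : Finset (Fin n) → ℝ := fun A => ψ (fun ε => walsh A ε • coeff f A)
  have ha : ∀ A, d < A.card → a A = 0 := by
    intro A hA
    have : (fun ε => walsh A ε • coeff f A) = (0 : (Fin n → Bool) → X) := by
      funext ε; rw [hf A hA, smul_zero]; rfl
    simp only [a, this, map_zero]
  let P : ℝ[X] := ∑ A ∈ Finset.univ.erase (∅ : Finset (Fin n)), C (a A) * Polynomial.X ^ A.card
  have hPdeg : P.degree ≤ d := by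
    refine (degree_sum_le _ _).trans (Finset.sup_le fun A _ => ?_)
    by_cases hA : d < A.card
    · simp [ha A hA]
    · refine (degree_C_mul_X_pow_le _ _).trans ?_
      exact_mod_cast not_lt.mp hA
  have hP0 : P.eval 0 = 0 := by
    simp only [P, eval_finsetSum]
    refine Finset.sum_eq_zero fun A hA => ?_
    have : A.card ≠ 0 := by simpa using hA
    simp [this]
  have hPd : ∀ r, P.derivative.eval r = ψ (dheat f r) := by
    intro r
    have e : dheat f r = ∑ A : Finset (Fin n), ((A.card : ℝ) * r ^ (A.card - 1)) •
        (fun ε => walsh A ε • coeff f A) := by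
      funext ε
      simp [dheat]
    have e2 : P.derivative.eval r = ∑ A ∈ Finset.univ.erase (∅ : Finset (Fin n)),
        ((A.card : ℝ) * r ^ (A.card - 1)) * a A := by
      simp only [P, derivative_sum, eval_finsetSum, derivative_C_mul_X_pow, eval_mul, eval_C,
        eval_pow, eval_X]
      refine Finset.sum_congr rfl fun A _ => ?_
      ring
    rw [e2, e, map_sum, Finset.sum_erase _ (by simp)]
    refine Finset.sum_congr rfl fun A _ => ?_
    rw [map_smul, smul_eq_mul]
  have hP1 : P.eval 1 = ψ (fun ε => f ε - (2 ^ n : ℝ)⁻¹ • ∑ δ : Fin n → Bool, f δ) := by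
    have e : (fun ε => f ε - (2 ^ n : ℝ)⁻¹ • ∑ δ : Fin n → Bool, f δ) =
        ∑ A ∈ Finset.univ.erase (∅ : Finset (Fin n)), (fun ε => walsh A ε • coeff f A) := by
      funext ε
      have h1 := walsh_inversion f ε
      rw [← Finset.add_sum_erase _ _ (Finset.mem_univ (∅ : Finset (Fin n)))] at h1
      rw [Finset.sum_apply, sub_eq_iff_eq_add']
      rw [h1]
      simp [walsh, coeff]
    rw [e, map_sum]
    simp only [P, eval_finsetSum, a, eval_mul, eval_C, eval_pow, eval_X, one_pow, mul_one]
  have key := scalar_main d hd P hPdeg hP0 (((2 ^ n : ℝ)⁻¹ * energy p f) ^ (1 / p))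
    (by positivity) (by
      intro r hr
      have hb := dheat_pow_bound' p hp f r hr.le
      have hb2 := Real.rpow_le_rpow (by positivity) hb (show 0 ≤ 1 / p by positivity)
      refine le_trans ?_ hb2
      rw [hPd, ← hnorm (fun ε => (1 - |r|) • dheat f r ε)]
      have h1 : (1 - |r|) * |ψ (dheat f r)| = |ψ (fun ε => (1 - |r|) • dheat f r ε)| := by
        have : (fun ε => (1 - |r|) • dheat f r ε) = (1 - |r|) • dheat f r := rfl
        rw [this, map_smul, smul_eq_mul, abs_mul, abs_of_nonneg (by linarith : 0 ≤ 1 - |r|)]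
      rw [h1, hψ, ← Real.norm_eq_abs]
      refine (φ.le_opNorm _).trans ?_
      exact mul_le_of_le_one_left (norm_nonneg _) hφ1)
  rw [hP1, hψ, hφ2] at key
  exact key

/-- **Pisier's inequality for functions of low degree.** -/
theorem stmt2 {X : Type*} [NormedAddCommGroup X] [NormedSpace ℂ X] [CompleteSpace X]
    (n d : ℕ) (hd : 1 ≤ d) (hdn : d ≤ n) (p : ℝ) (hp : 1 ≤ p)
    (f : (Fin n → Bool) → X) (hf : degLE f d) :
    lpNorm p (fun ε => f ε - (2 ^ n : ℝ)⁻¹ • ∑ δ : Fin n → Bool, f δ) ≤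
      3 * (Real.log d + 1) *
        ((2 ^ n : ℝ)⁻¹ * ∑ δ : Fin n → Bool,
          (lpNorm p (fun ε => ∑ i : Fin n, sgn (δ i) • pderiv i f ε)) ^ p) ^ (1 / p) := by
  have hp0 : 0 < p := by linarith
  have h1 : ∀ g : (Fin n → Bool) → X, lpNorm p g ^ p = (2 ^ n : ℝ)⁻¹ * ∑ ε, ‖g ε‖ ^ p := by
    intro g
    unfold lpNorm
    rw [← Real.rpow_mul (by positivity), one_div_mul_cancel hp0.ne', Real.rpow_one]
  simp only [h1]
  have hen : 0 ≤ energy p f :=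
    Finset.sum_nonneg fun _ _ => Finset.sum_nonneg fun _ _ => by positivity
  rw [← Finset.mul_sum, Finset.sum_comm]
  change _ ≤ 3 * (Real.log d + 1) * ((2 ^ n : ℝ)⁻¹ * ((2 ^ n : ℝ)⁻¹ * energy p f)) ^ (1 / p)
  unfold lpNorm
  rw [Real.mul_rpow (by positivity) (by positivity), Real.mul_rpow (by positivity) (by positivity)]
  have := final_bound n d hd p hp f hf
  have hc : 0 ≤ ((2 ^ n : ℝ)⁻¹) ^ (1 / p) := by positivity
  nlinarith [mul_le_mul_of_nonneg_left this hc]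

end HammingCube
end
end
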